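/- Let (X,d) be a compact metric space, f: X → X a continuous map, and μ an ergodic f-invariant Borel probability measure. For ε > 0 and γ ∈ (0,1), let N^μ(n,ε,γ) denote the minimum number of Bowen balls B_n(x,ε) needed to cover a set of μ-measure at least 1 − γ. Then h_μ(f) = lim_{ε→0} liminf_{n→∞} (1/n) log N^μ(n,ε,γ) = lim_{ε→0} limsup_{n→∞} (1/n) log N^μ(n,ε,γ). -/

import Mathlib

open MeasureTheory Filter Set Manifold ProbabilityTheory

noncomputable section

/-- Birkhoff sum `S_n φ(x) = ∑_{i<n} φ(f^i x)`. -/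
def birkhoffSumS {M : Type*} (f : M → M) (φ : M → ℝ) (n : ℕ) (x : M) : ℝ :=
  ∑ i ∈ Finset.range n, φ (f^[i] x)

/-- Bowen ball `B_n(x, ε) = {y : d(f^i x, f^i y) < ε for all 0 ≤ i ≤ n-1}`. -/
def bowenBall {M : Type*} [PseudoMetricSpace M] (f : M → M) (n : ℕ) (ε : ℝ) (x : M) : Set M :=
  {y | ∀ i < n, dist (f^[i] x) (f^[i] y) < ε}

/-- Dynamical entropy of a finite partition at time `n`: `H(⋁_{i<n} f^{-i} P)`,
where `H(Q) = ∑_{A ∈ Q} -μ(A) log μ(A)`. -/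
def partitionDynH {M : Type*} [MeasurableSpace M] (μ : Measure M) (f : M → M)
    (P : Finset (Set M)) (n : ℕ) : ℝ :=
  ∑ ω : Fin n → {A // A ∈ P},
    Real.negMulLog ((μ (⋂ i : Fin n, f^[(i : ℕ)] ⁻¹' ((ω i : Set M)))).toReal)

/-- A finite measurable partition of the space. -/
def IsFinMeasPartition {M : Type*} [MeasurableSpace M] (P : Finset (Set M)) : Prop :=
  (∀ A ∈ P, MeasurableSet A) ∧ (⋃₀ (P : Set (Set M)) = Set.univ) ∧
    (P : Set (Set M)).PairwiseDisjoint id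

/-- Measure-theoretic (Kolmogorov–Sinai) entropy `h_μ(f)`, as an extended real:
the supremum over finite measurable partitions of `lim_n H(⋁_{i<n} f^{-i}P)/n`. -/
def metricEntropy {M : Type*} [MeasurableSpace M] (μ : Measure M) (f : M → M) : EReal :=
  ⨆ P : {P : Finset (Set M) // IsFinMeasPartition P},
    Filter.atTop.liminf fun n : ℕ => ((partitionDynH μ f P n / n : ℝ) : EReal)

/-- `N^μ(n,ε,γ)`: the minimum number of Bowen balls `B_n(x,ε)` needed to cover a set of
`μ`-measure at least `1 - γ`. -/
def katokCoverNum {X : Type*} [PseudoMetricSpace X] [MeasurableSpace X] (μ : Measure X)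
    (f : X → X) (n : ℕ) (ε γ : ℝ) : ℕ :=
  sInf {k : ℕ | ∃ S : Finset X, S.card = k ∧
    ENNReal.ofReal (1 - γ) ≤ μ (⋃ x ∈ S, bowenBall f n ε x)}

/-- The mean ergodic theorem for an ergodic map, in the form of convergence in measure. -/
theorem tendstoInMeasure_birkhoffAverage {X : Type*} [MeasurableSpace X] {f : X → X}
    {μ : Measure X} [IsProbabilityMeasure μ] (hμ : Ergodic f μ) {g : X → ℝ} (hg : MemLp g 2 μ) :
    TendstoInMeasure μ (fun n x => birkhoffAverage ℝ f g n x) atTop (fun _ => ∫ x, g x ∂μ) := by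
  have hmp : MeasurePreserving f μ μ := hμ.toMeasurePreserving
  set U : Lp ℝ 2 μ →L[ℝ] Lp ℝ 2 μ :=
    (Lp.compMeasurePreservingₗᵢ ℝ f hmp).toContinuousLinearMap with hU
  have hUapp : ∀ v : Lp ℝ 2 μ, U v =ᵐ[μ] v ∘ f := fun v => Lp.coeFn_compMeasurePreserving v hmp
  have hnorm : ‖U‖ ≤ 1 := LinearIsometry.norm_toContinuousLinearMap_le _
  set F := U.eqLocus (1 : Lp ℝ 2 μ →L[ℝ] Lp ℝ 2 μ) with hF
  set y := F.orthogonalProjectionOnto (hg.toLp g) with hy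
  have htend := U.tendsto_birkhoffAverage_orthogonalProjection hnorm (hg.toLp g)
  have hyfix : U (y : Lp ℝ 2 μ) = y := y.2
  obtain ⟨c, hc⟩ := hμ.ae_eq_const_of_ae_eq_comp_ae (Lp.aestronglyMeasurable (y : Lp ℝ 2 μ))
    ((hUapp _).symm.trans (by rw [hyfix]))
  have hone : MemLp (fun _ : X => (1 : ℝ)) 2 μ := memLp_const 1
  have hcomp : ∀ {a b : X → ℝ}, a =ᵐ[μ] b → a ∘ f =ᵐ[μ] b ∘ f := fun h =>
    hmp.quasiMeasurePreserving.ae_eq_comp h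
  have honeF : hone.toLp _ ∈ F := by
    change U (hone.toLp _) = hone.toLp _
    apply Lp.ext
    filter_upwards [hUapp (hone.toLp _), hcomp hone.coeFn_toLp, hone.coeFn_toLp] with x h1 h2 h3
    rw [h1, h2, h3]; rfl
  have hcint : c = ∫ x, g x ∂μ := by
    have h := F.inner_orthogonalProjectionOnto_eq_of_mem_left ⟨_, honeF⟩ (hg.toLp g)
    change inner ℝ (hone.toLp _) (y : Lp ℝ 2 μ) = inner ℝ (hone.toLp _) (hg.toLp g) at h
    rw [L2.inner_def, L2.inner_def] at h
    have e1 : ∫ x, inner ℝ ((hone.toLp _ : Lp ℝ 2 μ) x) ((y : Lp ℝ 2 μ) x) ∂μ = c := by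
      rw [integral_congr_ae (g := fun _ => c)]
      · simp
      · filter_upwards [hone.coeFn_toLp, hc] with x h1 h2
        rw [h1, h2]; simp
    have e2 : ∫ x, inner ℝ ((hone.toLp _ : Lp ℝ 2 μ) x) ((hg.toLp g : Lp ℝ 2 μ) x) ∂μ =
        ∫ x, g x ∂μ := by
      apply integral_congr_ae
      filter_upwards [hone.coeFn_toLp, hg.coeFn_toLp] with x h1 h2
      rw [h1, h2]; simp
    rw [e1, e2] at h
    exact h
  have hiter : ∀ n, (U^[n] (hg.toLp g) : Lp ℝ 2 μ) =ᵐ[μ] g ∘ f^[n] := by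
    intro n
    induction n with
    | zero => exact hg.coeFn_toLp
    | succ n ih =>
      rw [Function.iterate_succ_apply', Function.iterate_succ, ← Function.comp_assoc]
      exact (hUapp _).trans (hcomp ih)
  have havg : ∀ n, (birkhoffAverage ℝ U _root_.id n (hg.toLp g) : Lp ℝ 2 μ) =ᵐ[μ]
      fun x => birkhoffAverage ℝ f g n x := by
    intro n
    have hall : ∀ᵐ x ∂μ, ∀ i : ℕ, (U^[i] (hg.toLp g) : Lp ℝ 2 μ) x = (g ∘ f^[i]) x :=
      ae_all_iff.2 hiter
    simp only [birkhoffAverage, birkhoffSum, id]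
    filter_upwards [hall, Lp.coeFn_smul ((n : ℝ)⁻¹) (∑ i ∈ Finset.range n, U^[i] (hg.toLp g)),
      Lp.coeFn_finsetSum (Finset.range n) (fun i => U^[i] (hg.toLp g))] with x h1 h2 h3
    rw [h2, Pi.smul_apply, h3, Finset.sum_apply]
    simp [h1]
  have hm := tendstoInMeasure_of_tendsto_Lp htend
  refine (hm.congr_left havg).congr_right ?_
  rw [← hcint]
  exact hc

/-- The word of length `n` recorded along the orbit of `x` by the labelling `l`. -/
def itinerary {X A : Type*} (f : X → X) (l : X → A) (n : ℕ) (x : X) : Fin n → A :=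
  fun i => l (f^[i] x)

/-- The probability of a word of length `n`. -/
def wordProb {X A : Type*} [MeasurableSpace X] (μ : Measure X) (f : X → X) (l : X → A) (n : ℕ)
    (w : Fin n → A) : ℝ :=
  μ.real (itinerary f l n ⁻¹' {w})

/-- The Shannon entropy of the distribution of words of length `n`. -/
def wordEntropy {X A : Type*} [MeasurableSpace X] [Fintype A] (μ : Measure X) (f : X → X)
    (l : X → A) (n : ℕ) : ℝ :=
  ∑ w, Real.negMulLog (wordProb μ f l n w)

/-- The conditional probability of the last letter of a word given the preceding ones. -/
def transProb {X A : Type*} [MeasurableSpace X] (μ : Measure X) (f : X → X) (l : X → A) (m : ℕ)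
    (u : Fin (m + 1) → A) : ℝ :=
  wordProb μ f l (m + 1) u / wordProb μ f l m (Fin.init u)

/-- The weight of a word of length `m + n` under the `m`-step Markov approximation, conditioned
on its first `m` letters. -/
def markovWeight {X A : Type*} [MeasurableSpace X] (μ : Measure X) (f : X → X) (l : X → A) (m : ℕ) :
    (n : ℕ) → (Fin (m + n) → A) → ℝ
  | 0, _ => 1
  | n + 1, w => markovWeight μ f l m n (Fin.init w) *
      transProb μ f l m fun j : Fin (m + 1) => w ⟨n + j, by omega⟩

section Words

variable {X A : Type*} [MeasurableSpace X] [Fintype A] [MeasurableSpace A]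
  [DiscreteMeasurableSpace A] {μ : Measure X} [IsProbabilityMeasure μ] {f : X → X} {l : X → A}

omit [Fintype A] [DiscreteMeasurableSpace A] in
theorem measurable_itinerary (hf : Measurable f) (hl : Measurable l) (n : ℕ) :
    Measurable (itinerary f l n) :=
  measurable_pi_lambda _ fun i => hl.comp (hf.iterate i)

theorem sum_wordProb (hf : Measurable f) (hl : Measurable l) (n : ℕ) (S : Finset (Fin n → A)) :
    ∑ w ∈ S, wordProb μ f l n w = μ.real (itinerary f l n ⁻¹' S) :=
  sum_measureReal_preimage_singleton S
    fun w _ => measurable_itinerary hf hl n (measurableSet_singleton w)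

omit [Fintype A] [MeasurableSpace A] [DiscreteMeasurableSpace A] [IsProbabilityMeasure μ] in
theorem wordProb_nonneg (n : ℕ) (w : Fin n → A) : 0 ≤ wordProb μ f l n w :=
  measureReal_nonneg

theorem sum_univ_wordProb (hf : Measurable f) (hl : Measurable l) (n : ℕ) :
    ∑ w, wordProb μ f l n w = 1 := by
  rw [sum_wordProb hf hl]
  simp

omit [MeasurableSpace A] [DiscreteMeasurableSpace A] in
theorem sum_snoc {n : ℕ} (F : (Fin (n + 1) → A) → ℝ) :
    ∑ w, F w = ∑ v : Fin n → A, ∑ a, F (Fin.snoc v a) := by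
  rw [← (Fin.snocEquiv fun _ => A).sum_comp, Fintype.sum_prod_type_right]
  rfl

theorem sum_wordProb_snoc (hf : Measurable f) (hl : Measurable l) (n : ℕ) (v : Fin n → A) :
    ∑ a, wordProb μ f l (n + 1) (Fin.snoc v a) = wordProb μ f l n v := by
  have hinj : Function.Injective fun a : A => (Fin.snoc v a : Fin (n + 1) → A) := by
    intro a b h
    simpa using congrFun h (Fin.last n)
  have hmap := Finset.sum_map Finset.univ ⟨_, hinj⟩ (wordProb μ f l (n + 1))
  simp only [Function.Embedding.coeFn_mk] at hmap
  rw [← hmap, sum_wordProb hf hl]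
  congr 1
  ext x
  simp only [Finset.coe_map, Function.Embedding.coeFn_mk, Finset.coe_univ, Set.image_univ,
    Set.mem_preimage, Set.mem_range, Set.mem_singleton_iff]
  constructor
  · rintro ⟨a, ha⟩
    have : Fin.init (itinerary f l (n + 1) x) = v := by rw [← ha]; simp
    exact this
  · rintro rfl
    exact ⟨_, Fin.snoc_init_self (itinerary f l (n + 1) x)⟩

omit [Fintype A] [MeasurableSpace A] [DiscreteMeasurableSpace A] in
theorem wordProb_le_init (n : ℕ) (u : Fin (n + 1) → A) :
    wordProb μ f l (n + 1) u ≤ wordProb μ f l n (Fin.init u) := by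
  refine measureReal_mono ?_
  rintro x rfl
  rfl

theorem sum_negMulLog_wordProb_le (hf : Measurable f) (hl : Measurable l) (n : ℕ)
    (S : Finset (Fin n → A)) {K : ℝ} (hK : 0 < K) (hSK : (S.card : ℝ) ≤ K) :
    ∑ w ∈ S, Real.negMulLog (wordProb μ f l n w) ≤
      μ.real (itinerary f l n ⁻¹' S) * Real.log K + 1 := by
  have hterm : ∀ p : ℝ, 0 ≤ p → Real.negMulLog p ≤ p * Real.log K + K⁻¹ := by
    intro p hp
    rcases hp.eq_or_lt with rfl | hp
    · simpa using hK.le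
    · have h := Real.log_le_sub_one_of_pos (x := (p * K)⁻¹) (by positivity)
      rw [Real.log_inv, Real.log_mul hp.ne' hK.ne'] at h
      have h2 := mul_le_mul_of_nonneg_left h hp.le
      have h3 : p * ((p * K)⁻¹ - 1) = K⁻¹ - p := by field_simp
      rw [h3] at h2
      rw [Real.negMulLog]
      linarith
  calc ∑ w ∈ S, Real.negMulLog (wordProb μ f l n w)
      ≤ ∑ w ∈ S, (wordProb μ f l n w * Real.log K + K⁻¹) :=
        Finset.sum_le_sum fun w _ => hterm _ (wordProb_nonneg _ _)
    _ = μ.real (itinerary f l n ⁻¹' S) * Real.log K + S.card * K⁻¹ := by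
        rw [Finset.sum_add_distrib, ← Finset.sum_mul, sum_wordProb hf hl]
        simp
    _ ≤ _ := by
        gcongr
        rw [← div_eq_mul_inv]
        exact (div_le_one hK).2 hSK

theorem integral_itinerary (hf : Measurable f) (hl : Measurable l) (n : ℕ)
    (F : (Fin n → A) → ℝ) :
    ∫ x, F (itinerary f l n x) ∂μ = ∑ w, wordProb μ f l n w * F w := by
  have hm := measurable_itinerary hf hl n
  have := Measure.isProbabilityMeasure_map (μ := μ) hm.aemeasurable
  rw [← integral_map hm.aemeasurable (measurable_of_finite F).aestronglyMeasurable,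
    integral_fintype .of_finite]
  refine Finset.sum_congr rfl fun w _ => ?_
  rw [map_measureReal_apply hm (measurableSet_singleton w)]
  rfl

theorem integral_neg_log_transProb (hf : Measurable f) (hl : Measurable l) (m : ℕ) :
    ∫ x, -Real.log (transProb μ f l m (itinerary f l (m + 1) x)) ∂μ =
      wordEntropy μ f l (m + 1) - wordEntropy μ f l m := by
  rw [integral_itinerary hf hl (m + 1) fun u => -Real.log (transProb μ f l m u)]
  have hterm : ∀ u : Fin (m + 1) → A,
      wordProb μ f l (m + 1) u * -Real.log (transProb μ f l m u) =
        Real.negMulLog (wordProb μ f l (m + 1) u) +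
          wordProb μ f l (m + 1) u * Real.log (wordProb μ f l m (Fin.init u)) := by
    intro u
    rcases (wordProb_nonneg (μ := μ) (f := f) (l := l) (m + 1) u).eq_or_lt with h | h
    · simp [← h]
    · have h2 := h.trans_le (wordProb_le_init m u)
      rw [transProb, Real.log_div h.ne' h2.ne', Real.negMulLog]
      ring
  rw [Finset.sum_congr rfl fun u _ => hterm u, Finset.sum_add_distrib]
  have h2 : ∑ u, wordProb μ f l (m + 1) u * Real.log (wordProb μ f l m (Fin.init u)) =
      -wordEntropy μ f l m := by
    rw [sum_snoc, wordEntropy, ← Finset.sum_neg_distrib]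
    refine Finset.sum_congr rfl fun v _ => ?_
    simp only [Fin.init_snoc]
    rw [← Finset.sum_mul, sum_wordProb_snoc hf hl, Real.negMulLog]
    ring
  rw [h2]
  rfl

omit [Fintype A] [MeasurableSpace A] [DiscreteMeasurableSpace A] [IsProbabilityMeasure μ] in
theorem transProb_nonneg (m : ℕ) (u : Fin (m + 1) → A) : 0 ≤ transProb μ f l m u :=
  div_nonneg (wordProb_nonneg _ _) (wordProb_nonneg _ _)

omit [Fintype A] [MeasurableSpace A] [DiscreteMeasurableSpace A] [IsProbabilityMeasure μ] in
theorem markovWeight_nonneg (m n : ℕ) (w : Fin (m + n) → A) : 0 ≤ markovWeight μ f l m n w := by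
  induction n with
  | zero => exact zero_le_one
  | succ n ih => exact mul_nonneg (ih _) (transProb_nonneg _ _)

theorem sum_transProb_snoc_le (hf : Measurable f) (hl : Measurable l) (m : ℕ) (v : Fin m → A) :
    ∑ a, transProb μ f l m (Fin.snoc v a) ≤ 1 := by
  simp only [transProb, Fin.init_snoc]
  rw [← Finset.sum_div, sum_wordProb_snoc hf hl]
  exact div_self_le_one _

theorem sum_markovWeight_le (hf : Measurable f) (hl : Measurable l) (m n : ℕ) :
    ∑ w, markovWeight μ f l m n w ≤ (Fintype.card A : ℝ) ^ m := by
  induction n with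
  | zero => simp [markovWeight]
  | succ n ih =>
    refine le_trans ?_ ih
    change ∑ w : Fin (m + n + 1) → A, markovWeight μ f l m (n + 1) w ≤ _
    rw [sum_snoc (n := m + n)]
    refine Finset.sum_le_sum fun v _ => ?_
    have hwin : ∀ a : A, (fun j : Fin (m + 1) =>
        (Fin.snoc v a : Fin (m + n + 1) → A) ⟨n + j, by omega⟩) =
        Fin.snoc (fun j : Fin m => v ⟨n + j, by omega⟩) a := by
      intro a
      ext j
      refine Fin.lastCases ?_ (fun j => ?_) j
      · rw [Fin.snoc_last]
        have : (⟨n + (Fin.last m : Fin (m + 1)), by simp; omega⟩ : Fin (m + n + 1)) =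
            Fin.last (m + n) := by ext; simp; omega
        rw [this, Fin.snoc_last]
      · rw [Fin.snoc_castSucc]
        exact Fin.snoc_castSucc (α := fun _ => A) (n := m + n) a v ⟨n + j, by omega⟩
    have hstep : ∀ a : A, markovWeight μ f l m (n + 1) (Fin.snoc v a : Fin (m + n + 1) → A) =
        markovWeight μ f l m n v *
          transProb μ f l m (Fin.snoc (fun j : Fin m => v ⟨n + j, by omega⟩) a) := by
      intro a
      rw [markovWeight, hwin]
      congr 2
      exact Fin.init_snoc (α := fun _ => A) a v
    rw [Finset.sum_congr rfl fun a _ => hstep a, ← Finset.mul_sum]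
    exact mul_le_of_le_one_right (markovWeight_nonneg _ _ _) (sum_transProb_snoc_le hf hl _ _)

omit [Fintype A] [MeasurableSpace A] [DiscreteMeasurableSpace A] [IsProbabilityMeasure μ] in
theorem markovWeight_itinerary (m n : ℕ) (x : X) :
    markovWeight μ f l m n (itinerary f l (m + n) x) =
      ∏ i ∈ Finset.range n, transProb μ f l m (itinerary f l (m + 1) (f^[i] x)) := by
  induction n with
  | zero => rfl
  | succ n ih =>
    rw [markovWeight, Finset.prod_range_succ, ← ih]
    congr 2
    ext j
    simp only [itinerary]
    rw [← Function.iterate_add_apply, add_comm n]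

theorem ae_wordProb_pos (hf : Measurable f) (hl : Measurable l) (n : ℕ) :
    ∀ᵐ x ∂μ, 0 < wordProb μ f l n (itinerary f l n x) := by
  classical
  have h := sum_wordProb (μ := μ) hf hl n {w | wordProb μ f l n w = 0}
  rw [Finset.sum_eq_zero fun w hw => (Finset.mem_filter.1 hw).2, eq_comm,
    measureReal_eq_zero_iff] at h
  filter_upwards [measure_eq_zero_iff_ae_notMem.1 h] with x hx
  refine (wordProb_nonneg _ _).lt_of_ne' fun h0 => hx ?_
  simpa using h0

theorem ae_transProb_pos (hf : Measurable f) (hl : Measurable l) (m : ℕ) :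
    ∀ᵐ x ∂μ, 0 < transProb μ f l m (itinerary f l (m + 1) x) := by
  filter_upwards [ae_wordProb_pos hf hl (m + 1)] with x hx
  exact div_pos hx (hx.trans_le (wordProb_le_init m _))

/-- Outside a set of vanishing measure, words of length `n` lie in a family of size about
`exp (n * r)`, for every `r` exceeding some conditional entropy. -/
theorem exists_typical_words (hμ : Ergodic f μ) (hl : Measurable l) (m : ℕ) {r : ℝ}
    (hr : wordEntropy μ f l (m + 1) - wordEntropy μ f l m < r) :
    ∃ W : ∀ n, Finset (Fin n → A),
      (∀ n, ((W n).card : ℝ) ≤ (Fintype.card A : ℝ) ^ m * Real.exp (n * r)) ∧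
      Tendsto (fun n => μ.real {x | itinerary f l n x ∉ W n}) atTop (nhds 0) := by
  classical
  have hf : Measurable f := hμ.measurable
  set V : ∀ n, Finset (Fin (m + n) → A) :=
    fun n => {w | Real.exp (-(n * r)) ≤ markovWeight μ f l m n w} with hV
  refine ⟨fun n => (V n).image fun w (i : Fin n) => w ⟨i, by omega⟩, fun n => ?_, ?_⟩
  · have h1 : ((V n).card : ℝ) * Real.exp (-(n * r)) ≤ (Fintype.card A : ℝ) ^ m := by
      refine le_trans ?_ (sum_markovWeight_le (μ := μ) hf hl m n)
      rw [← nsmul_eq_mul]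
      refine (Finset.card_nsmul_le_sum (V n) _ _ fun w hw => (Finset.mem_filter.1 hw).2).trans ?_
      exact Finset.sum_le_univ_sum_of_nonneg fun w => markovWeight_nonneg _ _ _
    rw [Real.exp_neg, ← div_eq_mul_inv, div_le_iff₀ (Real.exp_pos _)] at h1
    exact le_trans (by exact_mod_cast Finset.card_image_le) h1
  · set g : X → ℝ := fun x => -Real.log (transProb μ f l m (itinerary f l (m + 1) x)) with hg
    have hgmeas : Measurable g :=
      (measurable_of_finite fun u => -Real.log (transProb μ f l m u)).comp
        (measurable_itinerary hf hl (m + 1))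
    obtain ⟨B, hB⟩ := (Set.finite_range fun u => ‖-Real.log (transProb μ f l m u)‖).bddAbove
    have hgL : MemLp g 2 μ := MemLp.of_bound hgmeas.aestronglyMeasurable B
      (Eventually.of_forall fun x => hB ⟨itinerary f l (m + 1) x, rfl⟩)
    have hint : ∫ x, g x ∂μ = wordEntropy μ f l (m + 1) - wordEntropy μ f l m :=
      integral_neg_log_transProb hf hl m
    have hconv := tendstoInMeasure_iff_measureReal_norm.1 (tendstoInMeasure_birkhoffAverage hμ hgL)
      (r - ∫ x, g x ∂μ) (by rw [hint]; linarith)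
    refine tendsto_of_tendsto_of_tendsto_of_le_of_le' tendsto_const_nhds hconv
      (Eventually.of_forall fun n => measureReal_nonneg) ?_
    filter_upwards [eventually_ge_atTop 1] with n hn
    have hpos : ∀ᵐ x ∂μ, ∀ i : ℕ, 0 < transProb μ f l m (itinerary f l (m + 1) (f^[i] x)) :=
      ae_all_iff.2 fun i =>
        (hμ.toMeasurePreserving.iterate i).quasiMeasurePreserving.ae (ae_transProb_pos hf hl m)
    refine ENNReal.toReal_mono (measure_ne_top _ _) (measure_mono_ae ?_)
    filter_upwards [hpos] with x hx hxW
    change r - ∫ x, g x ∂μ ≤ ‖birkhoffAverage ℝ f g n x - ∫ x, g x ∂μ‖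
    by_contra! hlt
    refine hxW (Finset.mem_image.2 ⟨itinerary f l (m + n) x, ?_, rfl⟩)
    rw [hV, Finset.mem_filter, markovWeight_itinerary]
    refine ⟨Finset.mem_univ _, ?_⟩
    rw [← Real.exp_log (Finset.prod_pos fun i _ => hx i), Real.exp_le_exp,
      Real.log_prod fun i _ => (hx i).ne']
    have hn' : (0 : ℝ) < n := by exact_mod_cast hn
    have h1 : birkhoffAverage ℝ f g n x < r := by
      have := (le_abs_self _).trans_lt hlt
      linarith
    rw [birkhoffAverage, birkhoffSum, smul_eq_mul, inv_mul_lt_iff₀ hn', Finset.sum_neg_distrib] at h1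
    linarith

omit [MeasurableSpace A] [DiscreteMeasurableSpace A] in
theorem wordEntropy_zero : wordEntropy μ f l 0 = 0 := by
  have h : itinerary f l 0 ⁻¹' {default} = Set.univ :=
    Set.eq_univ_of_forall fun _ => Subsingleton.elim _ _
  simp [wordEntropy, wordProb, h]

omit [MeasurableSpace A] [DiscreteMeasurableSpace A] in
theorem wordEntropy_nonneg (n : ℕ) : 0 ≤ wordEntropy μ f l n :=
  Finset.sum_nonneg fun _ _ => Real.negMulLog_nonneg measureReal_nonneg measureReal_le_one

omit [MeasurableSpace A] [DiscreteMeasurableSpace A] in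
theorem exists_wordEntropy_succ_sub_lt {r : ℝ}
    (h : atTop.liminf (fun n : ℕ => ((wordEntropy μ f l n / n : ℝ) : EReal)) < r) :
    ∃ m, wordEntropy μ f l (m + 1) - wordEntropy μ f l m < r := by
  by_contra! hcon
  have hlin : ∀ n : ℕ, n * r ≤ wordEntropy μ f l n := by
    intro n
    induction n with
    | zero => simp [wordEntropy_zero]
    | succ n ih =>
      have := hcon n
      push_cast
      linarith
  refine h.not_ge (le_liminf_of_le (h := ?_))
  filter_upwards [eventually_ge_atTop 1] with n hn
  rw [EReal.coe_le_coe_iff, le_div_iff₀ (by exact_mod_cast hn), mul_comm]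
  exact hlin n

end Words

theorem exists_label_of_isFinMeasPartition {X : Type*} [MeasurableSpace X] {P : Finset (Set X)}
    (hP : IsFinMeasPartition P) :
    ∃ l : X → {A // A ∈ P}, (∀ A, l ⁻¹' {A} = A) ∧
      ∀ (μ : Measure X) (f : X → X) (n : ℕ), partitionDynH μ f P n = wordEntropy μ f l n := by
  have hex : ∀ x : X, ∃ A : {A // A ∈ P}, x ∈ (A : Set X) := by
    intro x
    obtain ⟨A, hA, hx⟩ := Set.mem_sUnion.1 (hP.2.1 ▸ Set.mem_univ x)
    exact ⟨⟨A, hA⟩, hx⟩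
  choose l hl using hex
  have hfib : ∀ A : {A // A ∈ P}, l ⁻¹' {A} = A := by
    intro A
    ext x
    refine ⟨?_, fun hx => ?_⟩
    · rintro rfl
      exact hl x
    · by_contra hne
      exact Set.disjoint_left.1 (hP.2.2 (l x).2 A.2 fun h => hne (Subtype.ext h)) (hl x) hx
  refine ⟨l, hfib, fun μ f n => ?_⟩
  refine Finset.sum_congr rfl fun w _ => ?_
  rw [wordProb, measureReal_def]
  congr 3
  ext x
  simp only [← hfib, Set.mem_iInter, Set.mem_preimage, Set.mem_singleton_iff, funext_iff]
  rfl

theorem exists_isFinMeasPartition_dist_lt {X : Type*} [PseudoMetricSpace X] [CompactSpace X]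
    [MeasurableSpace X] [BorelSpace X] {ε : ℝ} (hε : 0 < ε) :
    ∃ P : Finset (Set X), IsFinMeasPartition P ∧ ∀ A ∈ P, ∀ x ∈ A, ∀ y ∈ A, dist x y < ε := by
  classical
  obtain ⟨t, -, ht⟩ := (isCompact_univ (X := X)).elim_nhds_subcover
    (fun x => Metric.ball x (ε / 2)) fun x _ => Metric.ball_mem_nhds x (half_pos hε)
  set e := t.equivFin with he
  set b : ℕ → Set X := fun k =>
    if h : k < t.card then Metric.ball (e.symm ⟨k, h⟩ : X) (ε / 2) else ∅ with hb
  have hbm : ∀ k, MeasurableSet (b k) := by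
    intro k
    simp only [hb]
    split_ifs
    · exact measurableSet_ball
    · exact MeasurableSet.empty
  have hsmall : ∀ k, ∀ x ∈ b k, ∀ y ∈ b k, dist x y < ε := by
    intro k x hx y hy
    simp only [hb] at hx hy
    split_ifs at hx hy with h
    · have := dist_triangle_right x y (e.symm ⟨k, h⟩ : X)
      rw [Metric.mem_ball] at hx hy
      linarith
    · exact hx.elim
  refine ⟨(Finset.range t.card).image (disjointed b), ⟨?_, ?_, ?_⟩, ?_⟩
  · intro A hA
    obtain ⟨k, -, rfl⟩ := Finset.mem_image.1 hA
    exact MeasurableSet.disjointed hbm k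
  · refine Set.eq_univ_of_forall fun x => ?_
    obtain ⟨c, hc, hxc⟩ := Set.mem_iUnion₂.1 (ht (Set.mem_univ x))
    have hx : x ∈ ⋃ k, b k := by
      refine Set.mem_iUnion.2 ⟨e ⟨c, hc⟩, ?_⟩
      simpa [hb] using hxc
    rw [← iUnion_disjointed] at hx
    obtain ⟨k, hk⟩ := Set.mem_iUnion.1 hx
    refine ⟨disjointed b k, ?_, hk⟩
    have hkb := disjointed_subset b k hk
    refine Finset.mem_coe.2 (Finset.mem_image_of_mem _ (Finset.mem_range.2 ?_))
    by_contra hlt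
    simp [hb, hlt] at hkb
  · intro A hA B hB hAB
    obtain ⟨k, -, rfl⟩ := Finset.mem_image.1 (Finset.mem_coe.1 hA)
    obtain ⟨j, -, rfl⟩ := Finset.mem_image.1 (Finset.mem_coe.1 hB)
    exact disjoint_disjointed b fun h => hAB (by rw [h])
  · intro A hA x hx y hy
    obtain ⟨k, -, rfl⟩ := Finset.mem_image.1 hA
    exact hsmall k x (disjointed_subset b k hx) y (disjointed_subset b k hy)

theorem isOpen_bowenBall {X : Type*} [PseudoMetricSpace X] {f : X → X} (hf : Continuous f) (n : ℕ)
    (ε : ℝ) (x : X) : IsOpen (bowenBall f n ε x) := by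
  have : bowenBall f n ε x = ⋂ i ∈ Finset.range n, {y | dist (f^[i] x) (f^[i] y) < ε} := by
    ext y
    simp [bowenBall]
  rw [this]
  exact isOpen_biInter_finset fun i _ =>
    isOpen_lt (continuous_const.dist (hf.iterate i)) continuous_const

theorem exists_card_eq_katokCoverNum {X : Type*} [PseudoMetricSpace X] [CompactSpace X]
    [MeasurableSpace X] {μ : Measure X} [IsProbabilityMeasure μ] {f : X → X} (hf : Continuous f)
    (n : ℕ) {ε γ : ℝ} (hε : 0 < ε) (hγ : 0 ≤ γ) :
    ∃ S : Finset X, S.card = katokCoverNum μ f n ε γ ∧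
      ENNReal.ofReal (1 - γ) ≤ μ (⋃ x ∈ S, bowenBall f n ε x) := by
  refine Nat.sInf_mem (s := {k : ℕ | ∃ S : Finset X, S.card = k ∧
    ENNReal.ofReal (1 - γ) ≤ μ (⋃ x ∈ S, bowenBall f n ε x)}) ?_
  obtain ⟨S, -, hS⟩ := (isCompact_univ (X := X)).elim_nhds_subcover (bowenBall f n ε)
    fun x _ => (isOpen_bowenBall hf n ε x).mem_nhds fun i _ => by simpa using hε
  refine ⟨_, S, rfl, ?_⟩
  rw [Set.univ_subset_iff.1 hS, measure_univ, ENNReal.ofReal_le_one]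
  linarith

theorem one_le_katokCoverNum {X : Type*} [PseudoMetricSpace X] [CompactSpace X]
    [MeasurableSpace X] {μ : Measure X} [IsProbabilityMeasure μ] {f : X → X} (hf : Continuous f)
    (n : ℕ) {ε γ : ℝ} (hε : 0 < ε) (hγ : γ ∈ Set.Ioo (0 : ℝ) 1) :
    1 ≤ katokCoverNum μ f n ε γ := by
  obtain ⟨S, hS, hμS⟩ := exists_card_eq_katokCoverNum (μ := μ) hf n hε hγ.1.le
  rw [← hS, Nat.one_le_iff_ne_zero, Finset.card_ne_zero, Finset.nonempty_iff_ne_empty]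
  rintro rfl
  have := hγ.2
  simp only [Finset.notMem_empty, Set.iUnion_of_empty, Set.iUnion_empty, measure_empty,
    nonpos_iff_eq_zero, ENNReal.ofReal_eq_zero] at hμS
  linarith

theorem limsup_katok_le_metricEntropy {X : Type*} [MetricSpace X] [CompactSpace X]
    [MeasurableSpace X] [BorelSpace X] {f : X → X} (hf : Continuous f) {μ : Measure X}
    [IsProbabilityMeasure μ] (hμ : Ergodic f μ) {γ : ℝ} (hγ : γ ∈ Set.Ioo (0 : ℝ) 1) {ε : ℝ}
    (hε : 0 < ε) :
    atTop.limsup (fun n : ℕ => ((Real.log (katokCoverNum μ f n ε γ) / n : ℝ) : EReal)) ≤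
      metricEntropy μ f := by
  classical
  refine EReal.le_of_forall_lt_iff_le.1 fun r hr => ?_
  obtain ⟨P, hP, hPε⟩ := exists_isFinMeasPartition_dist_lt (X := X) hε
  obtain ⟨l, hfib, hH⟩ := exists_label_of_isFinMeasPartition hP
  let _ : MeasurableSpace {A // A ∈ P} := ⊤
  have : DiscreteMeasurableSpace {A // A ∈ P} := ⟨fun _ => trivial⟩
  have hl : Measurable l := measurable_to_countable' fun A => by
    rw [hfib]
    exact hP.1 _ A.2
  have hlim := (le_iSup (fun P : {P : Finset (Set X) // IsFinMeasPartition P} =>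
    Filter.atTop.liminf fun n : ℕ => ((partitionDynH μ f P n / n : ℝ) : EReal)) ⟨P, hP⟩).trans_lt hr
  simp only [hH] at hlim
  obtain ⟨m, hm⟩ := exists_wordEntropy_succ_sub_lt hlim
  obtain ⟨W, hWcard, hWlim⟩ := exists_typical_words hμ hl m hm
  set C : ℝ := (Fintype.card {A // A ∈ P} : ℝ) ^ m with hC
  have hbound : ∀ᶠ n : ℕ in atTop,
      Real.log (katokCoverNum μ f n ε γ) / n ≤ Real.log C / n + r := by
    filter_upwards [hWlim.eventually_lt_const hγ.1, eventually_ge_atTop 1] with n hn hn1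
    have hn' : (0 : ℝ) < n := by exact_mod_cast hn1
    obtain ⟨x₀⟩ := nonempty_of_isProbabilityMeasure μ
    set c : (Fin n → {A // A ∈ P}) → X :=
      fun w => if h : ∃ x, itinerary f l n x = w then h.choose else x₀ with hc
    have hcx : ∀ x, itinerary f l n (c (itinerary f l n x)) = itinerary f l n x := by
      intro x
      have h : ∃ y, itinerary f l n y = itinerary f l n x := ⟨x, rfl⟩
      simp only [hc, dif_pos h]
      exact h.choose_spec
    have hsub : {x | itinerary f l n x ∈ W n} ⊆
        ⋃ x ∈ (W n).image c, bowenBall f n ε x := by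
      intro x hx
      refine Set.mem_iUnion₂.2 ⟨_, Finset.mem_image_of_mem c hx, fun i hi => ?_⟩
      have hlx : l (f^[i] (c (itinerary f l n x))) = l (f^[i] x) := congrFun (hcx x) ⟨i, hi⟩
      refine hPε _ (l (f^[i] x)).2 _ ?_ _ ?_
      · rw [← hfib]
        exact hlx
      · rw [← hfib]
        rfl
    have hmeas : MeasurableSet {x | itinerary f l n x ∈ W n} :=
      measurable_itinerary hf.measurable hl n (W n).measurableSet
    have hN : katokCoverNum μ f n ε γ ≤ (W n).card := by
      refine le_trans (Nat.sInf_le ⟨(W n).image c, rfl, ?_⟩) Finset.card_image_le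
      refine le_trans ?_ (measure_mono hsub)
      refine ENNReal.ofReal_le_of_le_toReal ?_
      have := probReal_compl_eq_one_sub (μ := μ) hmeas
      have hn2 : μ.real {x | itinerary f l n x ∈ W n}ᶜ < γ := hn
      rw [this] at hn2
      rw [← measureReal_def]
      linarith
    have hN1 := one_le_katokCoverNum (μ := μ) hf n hε hγ
    have hNpos : (0 : ℝ) < katokCoverNum μ f n ε γ := by exact_mod_cast hN1
    have hle : (katokCoverNum μ f n ε γ : ℝ) ≤ C * Real.exp (n * r) :=
      le_trans (by exact_mod_cast hN) (hWcard n)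
    have hCpos : 0 < C := by
      by_contra! h
      exact (hNpos.trans_le hle).not_ge (mul_nonpos_of_nonpos_of_nonneg h (Real.exp_pos _).le)
    have hlog := Real.log_le_log hNpos hle
    rw [Real.log_mul hCpos.ne' (Real.exp_pos _).ne', Real.log_exp] at hlog
    rw [div_add' _ _ _ hn'.ne']
    gcongr
    linarith
  have htend : Tendsto (fun n : ℕ => ((Real.log C / n + r : ℝ) : EReal)) atTop (nhds (r : EReal)) := by
    refine (continuous_coe_real_ereal.tendsto _).comp ?_
    simpa using (tendsto_const_div_atTop_nhds_zero_nat (Real.log C)).add_const r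
  rw [← htend.limsup_eq]
  exact limsup_le_limsup (hbound.mono fun n hn => EReal.coe_le_coe_iff.2 hn)

theorem card_hammingBall_le {A : Type*} [Fintype A] [DecidableEq A] {n : ℕ} (v : Fin n → A)
    {β : ℝ} (hβ : 0 ≤ β) (θ : ℝ) :
    ((Finset.univ.filter fun w : Fin n → A => (hammingDist w v : ℝ) ≤ θ * n).card : ℝ) ≤
      Real.exp (n * (β * θ + Fintype.card A * Real.exp (-β))) := by
  set s := Finset.univ.filter fun w : Fin n → A => (hammingDist w v : ℝ) ≤ θ * n with hs
  have hw : ∀ w : Fin n → A, Real.exp (-(β * hammingDist w v)) =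
      ∏ i, if w i ≠ v i then Real.exp (-β) else 1 := by
    intro w
    rw [Finset.prod_ite, Finset.prod_const, Finset.prod_const_one, mul_one, ← Real.exp_nat_mul,
      hammingDist]
    congr 1
    ring
  have h1 : (s.card : ℝ) * Real.exp (-(β * (θ * n))) ≤
      Real.exp (n * (Fintype.card A * Real.exp (-β))) := by
    calc (s.card : ℝ) * Real.exp (-(β * (θ * n)))
        ≤ ∑ w ∈ s, Real.exp (-(β * hammingDist w v)) := by
          rw [← nsmul_eq_mul]
          refine Finset.card_nsmul_le_sum _ _ _ fun w hws => ?_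
          have := (Finset.mem_filter.1 hws).2
          gcongr
      _ ≤ ∑ w, Real.exp (-(β * hammingDist w v)) :=
          Finset.sum_le_univ_sum_of_nonneg fun w => (Real.exp_pos _).le
      _ = ∏ i, ∑ a, if a ≠ v i then Real.exp (-β) else 1 := by
          simp only [hw]
          rw [Finset.prod_univ_sum, Fintype.piFinset_univ]
      _ ≤ ∏ _i : Fin n, Real.exp (Fintype.card A * Real.exp (-β)) := by
          refine Finset.prod_le_prod (fun i _ => Finset.sum_nonneg fun a _ => ?_) fun i _ => ?_
          · split_ifs
            · exact (Real.exp_pos _).le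
            · exact zero_le_one
          · refine le_trans ?_ (Real.add_one_le_exp _)
            have : ∀ a, (if a ≠ v i then Real.exp (-β) else 1) ≤
                Real.exp (-β) + if a = v i then 1 else 0 := by
              intro a
              by_cases h : a = v i
              · simp [h, Real.exp_nonneg]
              · simp [h]
            refine (Finset.sum_le_sum fun a _ => this a).trans ?_
            rw [Finset.sum_add_distrib]
            simp
      _ = _ := by
          rw [Finset.prod_const, ← Real.exp_nat_mul]
          simp
  rw [Real.exp_neg, ← div_eq_mul_inv, div_le_iff₀ (Real.exp_pos _), ← Real.exp_add] at h1
  refine h1.trans_eq ?_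
  congr 1
  ring

theorem exists_separated_set {X A : Type*} [MetricSpace X] [CompactSpace X] [MeasurableSpace X]
    [BorelSpace X] [Fintype A] [MeasurableSpace A] [DiscreteMeasurableSpace A] (μ : Measure X)
    [IsProbabilityMeasure μ] {l : X → A} (hl : Measurable l) {η : ℝ} (hη : 0 < η) :
    ∃ K : Set X, MeasurableSet K ∧ μ.real Kᶜ ≤ η ∧
      ∃ ε₀ > 0, ∀ x ∈ K, ∀ y ∈ K, dist x y < ε₀ → l x = l y := by
  obtain ⟨x₀⟩ := nonempty_of_isProbabilityMeasure μ
  have hA : (0 : ℝ) < Fintype.card A := by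
    exact_mod_cast Fintype.card_pos_iff.2 ⟨l x₀⟩
  have hK : ∀ a, ∃ F, F ⊆ l ⁻¹' {a} ∧ IsClosed F ∧
      μ (l ⁻¹' {a} \ F) < ENNReal.ofReal (η / Fintype.card A) := fun a =>
    (hl (measurableSet_singleton a)).exists_isClosed_sdiff_lt (measure_ne_top _ _)
      (ENNReal.ofReal_pos.2 (by positivity)).ne'
  choose F hFsub hFc hFμ using hK
  refine ⟨⋃ a, F a, .iUnion fun a => (hFc a).measurableSet, ?_, ?_⟩
  · have hsub : (⋃ a, F a)ᶜ ⊆ ⋃ a, l ⁻¹' {a} \ F a := fun x hx =>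
      Set.mem_iUnion.2 ⟨l x, rfl, fun h => hx (Set.mem_iUnion.2 ⟨_, h⟩)⟩
    refine (measureReal_mono hsub).trans ((measureReal_iUnion_fintype_le _).trans ?_)
    calc ∑ a, μ.real (l ⁻¹' {a} \ F a) ≤ ∑ _a : A, η / Fintype.card A :=
          Finset.sum_le_sum fun a _ => ENNReal.toReal_le_of_le_ofReal (by positivity) (hFμ a).le
      _ = η := by
          rw [Finset.sum_const, nsmul_eq_mul, Finset.card_univ]
          field_simp
  · have hsep : ∀ᶠ ε : ℝ in nhdsWithin 0 (Set.Ioi 0), ∀ a b, a ≠ b →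
        ∀ x ∈ F a, ∀ y ∈ F b, ε ≤ dist x y := by
      rw [eventually_all]
      intro a
      rw [eventually_all]
      intro b
      by_cases hab : a = b
      · exact Eventually.of_forall fun _ h => (h hab).elim
      · have hdisj : Disjoint (F a) (F b) := Set.disjoint_left.2 fun x hxa hxb =>
          hab ((hFsub a hxa).symm.trans (hFsub b hxb))
        obtain ⟨r, hr, hrd⟩ := Metric.exists_pos_forall_lt_edist (hFc a).isCompact (hFc b) hdisj
        filter_upwards [Ioo_mem_nhdsGT (show (0 : ℝ) < r from hr)] with ε hε _ x hx y hy
        have := hrd x hx y hy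
        rw [edist_dist, ← ENNReal.ofReal_coe_nnreal] at this
        exact hε.2.le.trans (ENNReal.ofReal_lt_ofReal_iff'.1 this).1.le
    obtain ⟨ε, hε, hεpos⟩ := (hsep.and self_mem_nhdsWithin).exists
    refine ⟨ε, hεpos, fun x hx y hy hxy => ?_⟩
    obtain ⟨a, ha⟩ := Set.mem_iUnion.1 hx
    obtain ⟨b, hb⟩ := Set.mem_iUnion.1 hy
    rw [show l x = a from hFsub a ha, show l y = b from hFsub b hb]
    by_contra hab
    exact (hε a b hab x ha y hb).not_gt hxy

theorem measureReal_visits_le {X : Type*} [MeasurableSpace X] {f : X → X} {μ : Measure X}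
    [IsProbabilityMeasure μ] (hf : MeasurePreserving f μ μ) {B : Set X} (hB : MeasurableSet B)
    [DecidablePred (· ∈ B)] {θ : ℝ} (hθ : 0 < θ) {n : ℕ} (hn : 0 < n) :
    μ.real {x | θ * n ≤ ((Finset.univ.filter fun i : Fin n => f^[i] x ∈ B).card : ℝ)} ≤
      μ.real B / θ := by
  have hn' : (0 : ℝ) < n := by exact_mod_cast hn
  have hcard : ∀ x, ((Finset.univ.filter fun i : Fin n => f^[i] x ∈ B).card : ℝ) =
      ∑ i : Fin n, (f^[i] ⁻¹' B).indicator (1 : X → ℝ) x := by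
    intro x
    rw [Finset.card_filter]
    push_cast
    refine Finset.sum_congr rfl fun i _ => ?_
    by_cases h : f^[i] x ∈ B <;> simp [h]
  have hm : ∀ i : ℕ, MeasurableSet (f^[i] ⁻¹' B) := fun i => hf.measurable.iterate i hB
  have hint : ∀ i : ℕ, Integrable ((f^[i] ⁻¹' B).indicator (1 : X → ℝ)) μ := fun i =>
    (integrable_const (1 : ℝ)).indicator (hm i)
  have hmarkov := mul_meas_ge_le_integral_of_nonneg (μ := μ)
    (f := fun x => ∑ i : Fin n, (f^[i] ⁻¹' B).indicator (1 : X → ℝ) x)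
    (Eventually.of_forall fun x => Finset.sum_nonneg fun i _ =>
      Set.indicator_nonneg (fun _ _ => zero_le_one) _)
    (integrable_finsetSum _ fun i _ => hint i) (θ * n)
  have hval : ∫ x, ∑ i : Fin n, (f^[i] ⁻¹' B).indicator (1 : X → ℝ) x ∂μ = n * μ.real B := by
    rw [integral_finsetSum (f := fun (i : Fin n) x => (f^[i] ⁻¹' B).indicator (1 : X → ℝ) x) _
      fun i _ => hint i]
    have : ∀ i : Fin n, ∫ x, (f^[i] ⁻¹' B).indicator (1 : X → ℝ) x ∂μ = μ.real B := by
      intro i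
      rw [integral_indicator_one (hm i),
        (hf.iterate i).measureReal_preimage hB.nullMeasurableSet]
    simp [this]
  rw [hval] at hmarkov
  simp only [hcard]
  rw [le_div_iff₀ hθ]
  have : (n : ℝ) * (μ.real {x | θ * n ≤ ∑ i : Fin n, (f^[i] ⁻¹' B).indicator (1 : X → ℝ) x} * θ) ≤
      n * μ.real B := by
    linarith
  exact le_of_mul_le_mul_left this hn'

/-- Words shadowed by an optimal family of Bowen balls: few words carry a definite mass. -/
theorem exists_words_of_katokCoverNum {X A : Type*} [MetricSpace X] [CompactSpace X]
    [MeasurableSpace X] [BorelSpace X] [Fintype A] {f : X → X} (hf : Continuous f)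
    {μ : Measure X} [IsProbabilityMeasure μ] (hμ : MeasurePreserving f μ μ) {l : X → A} {K : Set X}
    (hK : MeasurableSet K) {ε₀ : ℝ} (hsep : ∀ x ∈ K, ∀ y ∈ K, dist x y < ε₀ → l x = l y)
    {β θ : ℝ} (hβ : 0 ≤ β) (hθ : 0 < θ) {ε γ : ℝ} (hε : 0 < ε) (hεε₀ : 2 * ε ≤ ε₀) (hγ : 0 ≤ γ)
    {n : ℕ} (hn : 0 < n) :
    ∃ U : Finset (Fin n → A),
      (U.card : ℝ) ≤ katokCoverNum μ f n ε γ *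
        Real.exp (n * (β * θ + Fintype.card A * Real.exp (-β))) ∧
      1 - γ - μ.real Kᶜ / θ ≤ μ.real (itinerary f l n ⁻¹' U) := by
  classical
  obtain ⟨x₀⟩ := nonempty_of_isProbabilityMeasure μ
  obtain ⟨S, hS, hμS⟩ := exists_card_eq_katokCoverNum (μ := μ) hf n hε hγ
  set v : X → Fin n → A := fun x i =>
    if h : ∃ z ∈ bowenBall f n ε x, f^[i] z ∈ K then l (f^[i] h.choose) else l x₀ with hv
  have hvK : ∀ x, ∀ y ∈ bowenBall f n ε x, ∀ i : Fin n, f^[i] y ∈ K → l (f^[i] y) = v x i := by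
    intro x y hy i hi
    have h : ∃ z ∈ bowenBall f n ε x, f^[i] z ∈ K := ⟨y, hy, hi⟩
    simp only [hv, dif_pos h]
    refine hsep _ hi _ h.choose_spec.2 ?_
    have h1 := hy i i.2
    have h2 := h.choose_spec.1 i i.2
    have h3 := dist_triangle_left (f^[i] y) (f^[i] h.choose) (f^[i] x)
    linarith
  refine ⟨S.biUnion fun x => Finset.univ.filter fun w => (hammingDist w (v x) : ℝ) ≤ θ * n, ?_, ?_⟩
  · rw [← hS]
    refine le_trans (Nat.cast_le.2 Finset.card_biUnion_le) ?_
    rw [Nat.cast_sum, ← nsmul_eq_mul]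
    exact Finset.sum_le_card_nsmul _ _ _ fun x _ => card_hammingBall_le (v x) hβ θ
  · set G := {x | θ * n ≤ ((Finset.univ.filter fun i : Fin n => f^[i] x ∈ Kᶜ).card : ℝ)} with hG
    have hGμ : μ.real G ≤ μ.real Kᶜ / θ := measureReal_visits_le hμ hK.compl hθ hn
    have hcov : 1 - γ ≤ μ.real (⋃ x ∈ S, bowenBall f n ε x) :=
      (ENNReal.ofReal_le_iff_le_toReal (measure_ne_top _ _)).1 hμS
    have hsub : (⋃ x ∈ S, bowenBall f n ε x) ⊆ (itinerary f l n ⁻¹' ↑(S.biUnion fun x =>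
        Finset.univ.filter fun w => (hammingDist w (v x) : ℝ) ≤ θ * n)) ∪ G := by
      intro y hy
      obtain ⟨x, hxS, hyx⟩ := Set.mem_iUnion₂.1 hy
      by_cases hyG : y ∈ G
      · exact Or.inr hyG
      · left
        refine Finset.mem_coe.2 (Finset.mem_biUnion.2 ⟨x, hxS, Finset.mem_filter.2
          ⟨Finset.mem_univ _, ?_⟩⟩)
        rw [hG, Set.mem_ofPred_eq, not_le] at hyG
        refine le_trans (Nat.cast_le.2 (Finset.card_le_card fun i hi => ?_)) hyG.le
        rw [Finset.mem_filter] at hi ⊢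
        exact ⟨hi.1, fun hiK => hi.2 (hvK x y hyx i hiK)⟩
    have := (measureReal_mono (μ := μ) hsub).trans (measureReal_union_le _ _)
    linarith

section Lower

variable {X A : Type*} [MeasurableSpace X] [Fintype A] [MeasurableSpace A]
  [DiscreteMeasurableSpace A] {μ : Measure X} [IsProbabilityMeasure μ] {f : X → X} {l : X → A}

/-- A Fano-type inequality: splitting words into `U`, `W \ U` and the rest bounds the entropy. -/
theorem wordEntropy_le_of_words (hf : Measurable f) (hl : Measurable l) {n : ℕ}
    (U W : Finset (Fin n → A)) {KU KW : ℝ} (hKU : 0 < KU) (hU : (U.card : ℝ) ≤ KU) (hKW : 1 ≤ KW)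
    (hW : (W.card : ℝ) ≤ KW) :
    wordEntropy μ f l n ≤ μ.real (itinerary f l n ⁻¹' U) * Real.log KU +
      (1 - μ.real (itinerary f l n ⁻¹' U)) * Real.log KW +
      μ.real {x | itinerary f l n x ∉ W} * (n * Real.log (Fintype.card A)) + 3 := by
  classical
  obtain ⟨x₀⟩ := nonempty_of_isProbabilityMeasure μ
  have hA : 1 ≤ Fintype.card A := Fintype.card_pos_iff.2 ⟨l x₀⟩
  have hA' : (1 : ℝ) ≤ Fintype.card A := by exact_mod_cast hA
  have hm : ∀ S : Finset (Fin n → A), MeasurableSet (itinerary f l n ⁻¹' S) := fun S =>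
    measurable_itinerary hf hl n S.measurableSet
  have hsplit : wordEntropy μ f l n = ∑ w ∈ U, Real.negMulLog (wordProb μ f l n w) +
      (∑ w ∈ W \ U, Real.negMulLog (wordProb μ f l n w) +
        ∑ w ∈ (U ∪ W)ᶜ, Real.negMulLog (wordProb μ f l n w)) := by
    rw [wordEntropy, ← Finset.sum_add_sum_compl (U ∪ W), ← Finset.union_sdiff_self_eq_union,
      Finset.sum_union Finset.disjoint_sdiff]
    ring
  have h1 := sum_negMulLog_wordProb_le (μ := μ) hf hl n U hKU hU
  have h2 := sum_negMulLog_wordProb_le (μ := μ) hf hl n (W \ U) (zero_lt_one.trans_le hKW)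
    (le_trans (by exact_mod_cast Finset.card_le_card Finset.sdiff_subset) hW)
  have h3 := sum_negMulLog_wordProb_le (μ := μ) hf hl n (U ∪ W)ᶜ
    (K := (Fintype.card A : ℝ) ^ n) (by positivity)
    (by exact_mod_cast (Finset.card_le_univ _).trans (by simp))
  have hp2 : μ.real (itinerary f l n ⁻¹' ↑(W \ U)) ≤ 1 - μ.real (itinerary f l n ⁻¹' U) := by
    rw [← probReal_compl_eq_one_sub (hm U)]
    refine measureReal_mono fun x hx => ?_
    simp only [Finset.coe_sdiff, Set.mem_preimage, Set.mem_sdiff] at hx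
    exact hx.2
  have hp3 : μ.real (itinerary f l n ⁻¹' ↑(U ∪ W)ᶜ) ≤ μ.real {x | itinerary f l n x ∉ W} := by
    refine measureReal_mono fun x hx h => ?_
    simp only [Finset.coe_compl, Finset.coe_union, Set.mem_preimage, Set.mem_compl_iff] at hx
    exact hx (Or.inr h)
  have h2' := mul_le_mul_of_nonneg_right hp2 (Real.log_nonneg hKW)
  have h3' := mul_le_mul_of_nonneg_right hp3
    (mul_nonneg n.cast_nonneg (Real.log_nonneg hA'))
  rw [Real.log_pow] at h3
  linarith

theorem wordEntropy_le (hf : Measurable f) (hl : Measurable l) (n : ℕ) :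
    wordEntropy μ f l n ≤ n * Real.log (Fintype.card A) + 1 := by
  obtain ⟨x₀⟩ := nonempty_of_isProbabilityMeasure μ
  have hA : 0 < Fintype.card A := Fintype.card_pos_iff.2 ⟨l x₀⟩
  have h := sum_negMulLog_wordProb_le (μ := μ) hf hl n Finset.univ
    (K := (Fintype.card A : ℝ) ^ n) (by positivity) (by simp)
  rw [Real.log_pow] at h
  simpa [wordEntropy] using h

theorem exists_liminf_wordEntropy_eq_coe (hf : Measurable f) (hl : Measurable l) :
    ∃ h : ℝ, 0 ≤ h ∧
      atTop.liminf (fun n : ℕ => ((wordEntropy μ f l n / n : ℝ) : EReal)) = h := by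
  have h0 : (0 : EReal) ≤ atTop.liminf (fun n : ℕ => ((wordEntropy μ f l n / n : ℝ) : EReal)) :=
    le_liminf_of_le (h := Eventually.of_forall fun n => by
      exact_mod_cast div_nonneg (wordEntropy_nonneg n) n.cast_nonneg)
  have h1 : atTop.liminf (fun n : ℕ => ((wordEntropy μ f l n / n : ℝ) : EReal)) ≤
      ((Real.log (Fintype.card A) + 1 : ℝ) : EReal) := by
    refine liminf_le_of_le (h := fun b hb => ?_)
    obtain ⟨n, hbn, hn⟩ := (hb.and (eventually_ge_atTop 1)).exists
    refine hbn.trans (EReal.coe_le_coe_iff.2 ?_)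
    have hn' : (1 : ℝ) ≤ n := by exact_mod_cast hn
    rw [div_le_iff₀ (by linarith)]
    have := wordEntropy_le (μ := μ) hf hl n
    linarith
  lift atTop.liminf (fun n : ℕ => ((wordEntropy μ f l n / n : ℝ) : EReal)) to ℝ using
    ⟨(h1.trans_lt (EReal.coe_lt_top _)).ne, ((EReal.bot_lt_coe 0).trans_le h0).ne'⟩ with h
  exact ⟨h, by exact_mod_cast h0, rfl⟩

end Lower

theorem eventually_le_liminf_katok {X A : Type*} [MetricSpace X] [CompactSpace X]
    [MeasurableSpace X] [BorelSpace X] [Fintype A] [MeasurableSpace A] [DiscreteMeasurableSpace A]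
    {f : X → X} (hf : Continuous f) {μ : Measure X} [IsProbabilityMeasure μ] (hμ : Ergodic f μ)
    {γ : ℝ} (hγ : γ ∈ Set.Ioo (0 : ℝ) 1) {l : X → A} (hl : Measurable l) {r : ℝ}
    (hr : (r : EReal) < atTop.liminf (fun n : ℕ => ((wordEntropy μ f l n / n : ℝ) : EReal))) :
    ∀ᶠ ε : ℝ in nhdsWithin 0 (Set.Ioi 0), (r : EReal) ≤
      atTop.liminf (fun n : ℕ => ((Real.log (katokCoverNum μ f n ε γ) / n : ℝ) : EReal)) := by
  obtain ⟨h, h0, hh⟩ := exists_liminf_wordEntropy_eq_coe (μ := μ) hf.measurable hl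
  obtain ⟨x₀⟩ := nonempty_of_isProbabilityMeasure μ
  have hA : (1 : ℝ) ≤ Fintype.card A := by
    exact_mod_cast (Fintype.card_pos_iff.2 ⟨l x₀⟩ : 0 < Fintype.card A)
  obtain ⟨κ, hκ, rfl⟩ : ∃ κ : ℝ, 0 < κ ∧ r = h - κ := by
    rw [hh, EReal.coe_lt_coe_iff] at hr
    exact ⟨h - r, by linarith, by ring⟩
  obtain ⟨c, hc, hcγ⟩ : ∃ c : ℝ, 0 < c ∧ 1 - γ = 2 * c :=
    ⟨(1 - γ) / 2, by linarith [hγ.2], by ring⟩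
  have hcκ : 0 < c * κ := mul_pos hc hκ
  obtain ⟨β, hβ, hβA⟩ : ∃ β : ℝ, 0 < β ∧ Fintype.card A * Real.exp (-β) ≤ κ / 16 := by
    have ht : Tendsto (fun β : ℝ => Fintype.card A * Real.exp (-β)) atTop (nhds 0) := by
      simpa using (Real.tendsto_exp_neg_atTop_nhds_zero.const_mul (Fintype.card A : ℝ))
    obtain ⟨β, h1, h2⟩ := ((eventually_gt_atTop 0).and
      (ht.eventually_le_const (by positivity : (0 : ℝ) < κ / 16))).exists
    exact ⟨β, h1, h2⟩
  set θ := κ / (16 * β) with hθ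
  have hθpos : 0 < θ := by positivity
  have hβθ : β * θ = κ / 16 := by rw [hθ]; field_simp
  obtain ⟨K, hKm, hKμ, ε₀, hε₀, hsep⟩ :=
    exists_separated_set μ hl (mul_pos hc hθpos)
  obtain ⟨m, hm⟩ := exists_wordEntropy_succ_sub_lt (μ := μ) (f := f) (l := l)
    (r := h + c * κ / 8) (by rw [hh, EReal.coe_lt_coe_iff]; linarith)
  obtain ⟨W, hWcard, hWlim⟩ := exists_typical_words hμ hl m hm
  set C : ℝ := (Fintype.card A : ℝ) ^ m with hC
  have hC1 : 1 ≤ C := one_le_pow₀ hA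
  have hent : ∀ᶠ n : ℕ in atTop, h - c * κ / 8 < wordEntropy μ f l n / n := by
    have hlt : ((h - c * κ / 8 : ℝ) : EReal) <
        atTop.liminf (fun n : ℕ => ((wordEntropy μ f l n / n : ℝ) : EReal)) := by
      rw [hh, EReal.coe_lt_coe_iff]
      linarith
    exact (eventually_lt_of_lt_liminf hlt).mono fun n hn => EReal.coe_lt_coe_iff.1 hn
  have hωlim : ∀ᶠ n : ℕ in atTop, μ.real {x | itinerary f l n x ∉ W n} *
      Real.log (Fintype.card A) < c * κ / 8 := by
    have := hWlim.mul_const (Real.log (Fintype.card A))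
    rw [zero_mul] at this
    exact this.eventually_lt_const (by positivity)
  have hconst : ∀ᶠ n : ℕ in atTop, (Real.log C + 3) / n < c * κ / 8 :=
    (tendsto_const_div_atTop_nhds_zero_nat _).eventually_lt_const (by positivity)
  filter_upwards [Ioo_mem_nhdsGT (half_pos hε₀)] with ε hε
  refine le_liminf_of_le (h := ?_)
  filter_upwards [hent, hωlim, hconst, eventually_ge_atTop 1] with n hent hω hconst hn
  have hn' : (0 : ℝ) < n := by exact_mod_cast hn
  rw [EReal.coe_le_coe_iff, le_div_iff₀ hn']
  obtain ⟨U, hUcard, hUμ⟩ := exists_words_of_katokCoverNum hf hμ.toMeasurePreserving hKm hsep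
    hβ.le hθpos hε.1 (by linarith [hε.2]) hγ.1.le hn
  have hN : (0 : ℝ) < katokCoverNum μ f n ε γ := by
    exact_mod_cast one_le_katokCoverNum (μ := μ) hf n hε.1 hγ
  have hexp : 1 ≤ Real.exp (n * (h + c * κ / 8)) := Real.one_le_exp (by positivity)
  have hfano := wordEntropy_le_of_words (μ := μ) hf.measurable hl U (W n) (by positivity) hUcard
    (one_le_mul_of_one_le_of_one_le hC1 hexp) (hWcard n)
  rw [Real.log_mul hN.ne' (Real.exp_pos _).ne', Real.log_exp,
    Real.log_mul (by positivity) (Real.exp_pos _).ne', Real.log_exp] at hfano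
  rw [lt_div_iff₀ hn'] at hent
  rw [div_lt_iff₀ hn'] at hconst
  have hωn := mul_lt_mul_of_pos_right hω hn'
  set p := μ.real (itinerary f l n ⁻¹' U) with hp
  have hpc : c ≤ p := by
    have : μ.real Kᶜ / θ ≤ c := (div_le_iff₀ hθpos).2 hKμ
    linarith
  have hp1 : p ≤ 1 := measureReal_le_one
  have hlogC : 0 ≤ Real.log C := Real.log_nonneg hC1
  by_contra! hlt
  have hnκ : 0 < n * κ := mul_pos hn' hκ
  have hδ : n * (β * θ + Fintype.card A * Real.exp (-β)) ≤ n * (κ / 8) :=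
    mul_le_mul_of_nonneg_left (by linarith) hn'.le
  have hU1 : p * (Real.log (katokCoverNum μ f n ε γ) +
      n * (β * θ + Fintype.card A * Real.exp (-β))) ≤ p * (n * h - n * κ * (7 / 8)) :=
    mul_le_mul_of_nonneg_left (by linarith) (hc.le.trans hpc)
  have hU2 : (1 - p) * (Real.log C + n * (h + c * κ / 8)) ≤
      Real.log C + (1 - p) * (n * h) + n * (c * κ / 8) := by
    have h1 : 0 ≤ p * Real.log C := mul_nonneg (hc.le.trans hpc) hlogC
    have h2 : 0 ≤ p * (n * (c * κ / 8)) := mul_nonneg (hc.le.trans hpc) (by positivity)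
    linarith
  have hU3 : c * (n * κ) ≤ p * (n * κ) := mul_le_mul_of_nonneg_right hpc hnκ.le
  have hpos : 0 < n * (c * κ) := mul_pos hn' hcκ
  linarith

/-- Katok's entropy formula. Let `(X,d)` be a compact metric space,
`f : X → X` continuous and `μ` an ergodic `f`-invariant Borel probability measure. For every
`γ ∈ (0,1)`,
`h_μ(f) = lim_{ε→0} liminf_n (1/n) log N^μ(n,ε,γ) = lim_{ε→0} limsup_n (1/n) log N^μ(n,ε,γ)`. -/
theorem katok_entropy_formula {X : Type*} [MetricSpace X] [CompactSpace X]
    [MeasurableSpace X] [BorelSpace X]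
    (f : X → X) (hf : Continuous f)
    (μ : Measure X) [IsProbabilityMeasure μ] (hμ : Ergodic f μ)
    (γ : ℝ) (hγ : γ ∈ Set.Ioo (0:ℝ) 1) :
    Filter.Tendsto
        (fun ε : ℝ => Filter.atTop.liminf
          (fun n : ℕ => ((Real.log (katokCoverNum μ f n ε γ) / n : ℝ) : EReal)))
        (nhdsWithin 0 (Set.Ioi 0)) (nhds (metricEntropy μ f)) ∧
    Filter.Tendsto
        (fun ε : ℝ => Filter.atTop.limsup
          (fun n : ℕ => ((Real.log (katokCoverNum μ f n ε γ) / n : ℝ) : EReal)))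
        (nhdsWithin 0 (Set.Ioi 0)) (nhds (metricEntropy μ f)) := by
  have hupper : ∀ ε : ℝ, 0 < ε → atTop.limsup
      (fun n : ℕ => ((Real.log (katokCoverNum μ f n ε γ) / n : ℝ) : EReal)) ≤ metricEntropy μ f :=
    fun ε hε => limsup_katok_le_metricEntropy hf hμ hγ hε
  have hlower : ∀ a < metricEntropy μ f, ∀ᶠ ε : ℝ in nhdsWithin 0 (Set.Ioi 0), a < atTop.liminf
      (fun n : ℕ => ((Real.log (katokCoverNum μ f n ε γ) / n : ℝ) : EReal)) := by
    intro a ha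
    obtain ⟨⟨P, hP⟩, haP⟩ := lt_iSup_iff.1 ha
    obtain ⟨r, har, hr⟩ := EReal.lt_iff_exists_real_btwn.1 haP
    obtain ⟨l, hfib, hH⟩ := exists_label_of_isFinMeasPartition hP
    let _ : MeasurableSpace {A // A ∈ P} := ⊤
    have : DiscreteMeasurableSpace {A // A ∈ P} := ⟨fun _ => trivial⟩
    have hl : Measurable l := measurable_to_countable' fun A => by
      rw [hfib]
      exact hP.1 _ A.2
    simp only [hH] at hr
    exact (eventually_le_liminf_katok hf hμ hγ hl hr).mono fun ε hε => har.trans_le hε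
  have hle : ∀ ε : ℝ, atTop.liminf
      (fun n : ℕ => ((Real.log (katokCoverNum μ f n ε γ) / n : ℝ) : EReal)) ≤ atTop.limsup
      (fun n : ℕ => ((Real.log (katokCoverNum μ f n ε γ) / n : ℝ) : EReal)) :=
    fun ε => liminf_le_limsup
  refine ⟨tendsto_order.2 ⟨hlower, fun a ha => ?_⟩, tendsto_order.2 ⟨fun a ha => ?_, fun a ha => ?_⟩⟩
  · filter_upwards [self_mem_nhdsWithin] with ε hε
    exact ((hle ε).trans (hupper ε hε)).trans_lt ha
  · exact (hlower a ha).mono fun ε hε => hε.trans_le (hle ε)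
  · filter_upwards [self_mem_nhdsWithin] with ε hε
    exact (hupper ε hε).trans_lt ha

end
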